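/- Let Ω ⊂ ℂⁿ be a bounded domain, m > 1, and let F : Ω × ℂⁿ → [0,∞) be Borel-measurable. Assume there are constants c > 0 and A > 0 such that: (i) F(z,X) ≥ c|X|/δ_Ω(z)^{1/m} for all z ∈ Ω, X ∈ ℂⁿ; (ii) every piecewise C¹ curve σ : [0,1] → Ω satisfies F-length(σ) ≥ (1/2)|log(δ_Ω(σ(0))/δ_Ω(σ(1)))|; (iii) d_F(x,y) ≤ log(1 + A|x−y|/√(δ_Ω(x)δ_Ω(y))) for all x, y ∈ Ω. Then there exists C > 0 such that every piecewise C¹ curve γ from x to y with F-length(γ) = d_F(x,y) (an F-geodesic) satisfies L(γ) ≤ C·|x−y|^{1/m}. -/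

import Mathlib

open Set Metric MeasureTheory Filter Bornology

noncomputable section


/-- Equip `ℂⁿ` with its Borel σ-algebra, so that `Measurable` means Borel measurable. -/
instance {n : ℕ} : MeasurableSpace (EuclideanSpace ℂ (Fin n)) := borel _

instance {n : ℕ} : BorelSpace (EuclideanSpace ℂ (Fin n)) := ⟨rfl⟩

/-- The Euclidean distance from a point to the boundary of `Ω`. -/
def bdist {n : ℕ} (Ω : Set (EuclideanSpace ℂ (Fin n))) (z : EuclideanSpace ℂ (Fin n)) : ℝ :=
  Metric.infDist z (frontier Ω)

/-- A curve `γ : [a,b] → ℂⁿ` is piecewise `C¹` if it is continuous and there is a finite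
partition of `[a,b]` on each closed subinterval of which `γ` is `C¹`. -/
def PiecewiseC1On {n : ℕ} (γ : ℝ → EuclideanSpace ℂ (Fin n)) (a b : ℝ) : Prop :=
  ContinuousOn γ (Set.Icc a b) ∧
  ∃ (k : ℕ) (t : Fin (k + 1) → ℝ), StrictMono t ∧ t 0 = a ∧ t (Fin.last k) = b ∧
    ∀ i : Fin k, ContDiffOn ℝ 1 γ (Set.Icc (t i.castSucc) (t i.succ))

/-- The `F`-length `∫_a^b F(γ(t), γ'(t)) dt` of a curve. -/
def Flength {n : ℕ} (F : EuclideanSpace ℂ (Fin n) → EuclideanSpace ℂ (Fin n) → ℝ)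
    (γ : ℝ → EuclideanSpace ℂ (Fin n)) (a b : ℝ) : ℝ :=
  ∫ t in a..b, F (γ t) (deriv γ t)

/-- The Euclidean length `∫_a^b |γ'(t)| dt` of a curve. -/
def eLength {n : ℕ} (γ : ℝ → EuclideanSpace ℂ (Fin n)) (a b : ℝ) : ℝ :=
  ∫ t in a..b, ‖deriv γ t‖

/-- `γ` is a piecewise `C¹` curve in `Ω` from `x` to `y`, parametrized on `[0,1]`. -/
def IsCurveIn {n : ℕ} (Ω : Set (EuclideanSpace ℂ (Fin n))) (x y : EuclideanSpace ℂ (Fin n))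
    (γ : ℝ → EuclideanSpace ℂ (Fin n)) : Prop :=
  PiecewiseC1On γ 0 1 ∧ (∀ t ∈ Set.Icc (0 : ℝ) 1, γ t ∈ Ω) ∧ γ 0 = x ∧ γ 1 = y

/-- The pseudodistance associated to the Finsler-type integrand `F`. -/
def dF {n : ℕ} (Ω : Set (EuclideanSpace ℂ (Fin n)))
    (F : EuclideanSpace ℂ (Fin n) → EuclideanSpace ℂ (Fin n) → ℝ)
    (x y : EuclideanSpace ℂ (Fin n)) : ℝ :=
  sInf {L | ∃ γ, IsCurveIn Ω x y γ ∧ L = Flength F γ 0 1}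

lemma LipschitzWith.comp_absolutelyContinuousOnInterval {g f : ℝ → ℝ} {K : NNReal} {a b : ℝ}
    (hg : LipschitzWith K g) (hf : AbsolutelyContinuousOnInterval f a b) :
    AbsolutelyContinuousOnInterval (g ∘ f) a b := by
  have h0 := Filter.Tendsto.const_mul (K : ℝ) hf
  rw [mul_zero] at h0
  refine squeeze_zero (fun _ => Finset.sum_nonneg fun _ _ => dist_nonneg) (fun E => ?_) h0
  rw [Finset.mul_sum]
  exact Finset.sum_le_sum fun i _ => hg.dist_le_mul _ _

/-- Change of variables `u = κ * h(t)` for the absolutely continuous primitive `h` of an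
integrable function, applied to the arctangent. -/
lemma integral_div_one_add_sq_le {φ : ℝ → ℝ} {κ s a b : ℝ} (hκ : 0 < κ)
    (hφ : IntervalIntegrable φ volume a b) :
    ∫ t in a..b, φ t / (1 + (κ * ((∫ u in a..t, φ u) - s)) ^ 2) ≤ Real.pi / κ := by
  set f : ℝ → ℝ := fun t => ∫ u in a..t, φ u with hf
  have hac : AbsolutelyContinuousOnInterval f a b :=
    hφ.absolutelyContinuousOnInterval_intervalIntegral (by simp)
  set g : ℝ → ℝ := fun v => Real.arctan (κ * (v - s)) with hg
  have hgd : ∀ v, HasDerivAt g (1 / (1 + (κ * (v - s)) ^ 2) * κ) v := fun v => by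
    have := (((hasDerivAt_id v).sub_const s).const_mul κ).arctan
    simpa [hg] using this
  have hlip : LipschitzWith κ.toNNReal g := by
    refine lipschitzWith_of_nnnorm_deriv_le (fun v => (hgd v).differentiableAt) fun v => ?_
    rw [(hgd v).deriv, ← NNReal.coe_le_coe, coe_nnnorm, Real.coe_toNNReal κ hκ.le,
      Real.norm_of_nonneg (by positivity)]
    have : 1 / (1 + (κ * (v - s)) ^ 2) ≤ 1 := by
      rw [div_le_one (by positivity)]; nlinarith [sq_nonneg (κ * (v - s))]
    calc _ ≤ 1 * κ := by gcongr
      _ = κ := one_mul _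
  have hint := (hlip.comp_absolutelyContinuousOnInterval hac).integral_deriv_eq_sub
  have hcongr : ∫ t in a..b, deriv (g ∘ f) t
      = ∫ t in a..b, κ * (φ t / (1 + (κ * (f t - s)) ^ 2)) := by
    refine intervalIntegral.integral_congr_ae ?_
    filter_upwards [hφ.ae_hasDerivAt_integral] with t ht htm
    have h1 := ht (uIoc_subset_uIcc htm) a (by simp)
    have := (hgd (f t)).comp t h1
    rw [this.deriv]; ring
  rw [hcongr, intervalIntegral.integral_const_mul] at hint
  rw [le_div_iff₀ hκ, mul_comm, hint]
  have h1 := Real.arctan_lt_pi_div_two (κ * (f b - s))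
  have h2 := Real.neg_pi_div_two_lt_arctan (κ * (f a - s))
  simp only [hg, Function.comp]
  linarith

lemma exp_neg_two_mul_abs_le (x : ℝ) : Real.exp (-(2 * |x|)) ≤ 1 / (1 + x ^ 2) := by
  rw [Real.exp_neg, ← one_div]
  refine one_div_le_one_div_of_le (by positivity) ?_
  have := Real.quadratic_le_exp_of_nonneg (x := 2 * |x|) (by positivity)
  have h2 := sq_abs x
  nlinarith [abs_nonneg x]

section Growth

variable {φ v d : ℝ → ℝ} {p q k c : ℝ}

lemma le_sqrt_mul_exp_mul_exp (hp : 0 < p) (hq : 0 < q)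
    {δ u w : ℝ} (h1 : δ ≤ p * Real.exp (2 * u)) (h2 : δ ≤ q * Real.exp (2 * w)) :
    δ ≤ Real.sqrt (p * q) * Real.exp (u + w) *
      Real.exp (-(2 * |u - ((u + w) / 2 + (Real.log q - Real.log p) / 4)|)) := by
  have hs : Real.sqrt (p * q) = Real.exp ((Real.log p + Real.log q) / 2) := by
    rw [Real.sqrt_eq_iff_mul_self_eq_of_pos (Real.exp_pos _), ← sq, ← Real.exp_nat_mul,
      ← Real.log_mul hp.ne' hq.ne', Nat.cast_ofNat, mul_div_cancel₀ _ two_ne_zero,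
      Real.exp_log (by positivity)]
  rw [← Real.exp_log hp, ← Real.exp_add] at h1
  rw [← Real.exp_log hq, ← Real.exp_add] at h2
  rw [hs, ← Real.exp_add, ← Real.exp_add]
  rcases abs_cases (u - ((u + w) / 2 + (Real.log q - Real.log p) / 4)) with ⟨h, _⟩ | ⟨h, _⟩ <;>
    rw [h]
  · refine h2.trans (Real.exp_le_exp.2 (by linarith))
  · refine h1.trans (Real.exp_le_exp.2 (by linarith))

lemma integral_le_of_exp_growth (hp : 0 < p) (hq : 0 < q) (hk : 0 < k) (hc : 0 < c)
    (hφ : IntervalIntegrable φ volume 0 1) (hv : IntervalIntegrable v volume 0 1)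
    (hφ0 : ∀ t ∈ Icc (0 : ℝ) 1, 0 ≤ φ t) (hd : ∀ t ∈ Icc (0 : ℝ) 1, 0 ≤ d t)
    (hvd : ∀ t ∈ Icc (0 : ℝ) 1, v t ≤ d t ^ k * φ t / c)
    (h1 : ∀ t ∈ Icc (0 : ℝ) 1, d t ≤ p * Real.exp (2 * ∫ u in (0 : ℝ)..t, φ u))
    (h2 : ∀ t ∈ Icc (0 : ℝ) 1, d t ≤ q * Real.exp (2 * ∫ u in t..(1 : ℝ), φ u)) :
    (∫ t in (0 : ℝ)..1, v t) ≤
        (Real.sqrt (p * q) * Real.exp (∫ t in (0 : ℝ)..1, φ t)) ^ k / c *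
          min (Real.pi / k) (∫ t in (0 : ℝ)..1, φ t) := by
  set ℓ := ∫ t in (0 : ℝ)..1, φ t with hℓ
  set H := Real.sqrt (p * q) * Real.exp ℓ with hH
  have hH0 : 0 < H := by positivity
  set s := ℓ / 2 + (Real.log q - Real.log p) / 4 with hs
  have hsub : ∀ t ∈ Icc (0 : ℝ) 1, (∫ u in (0 : ℝ)..t, φ u) + ∫ u in t..(1 : ℝ), φ u = ℓ :=
    fun t ht => intervalIntegral.integral_add_adjacent_intervals
      (hφ.mono_set (by rw [uIcc_of_le ht.1, uIcc_of_le zero_le_one]; exact Icc_subset_Icc_right ht.2))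
      (hφ.mono_set (by rw [uIcc_of_le ht.2, uIcc_of_le zero_le_one]; exact Icc_subset_Icc_left ht.1))
  have hdk : ∀ t ∈ Icc (0 : ℝ) 1,
      d t ^ k ≤ H ^ k * (1 / (1 + (k * ((∫ u in (0 : ℝ)..t, φ u) - s)) ^ 2)) := fun t ht => by
    have h := le_sqrt_mul_exp_mul_exp hp hq (h1 t ht) (h2 t ht)
    rw [hsub t ht, ← hH, ← hs] at h
    calc d t ^ k ≤ (H * Real.exp (-(2 * |(∫ u in (0 : ℝ)..t, φ u) - s|))) ^ k :=
          Real.rpow_le_rpow (hd t ht) h hk.le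
      _ = H ^ k * Real.exp (-(2 * |k * ((∫ u in (0 : ℝ)..t, φ u) - s)|)) := by
          rw [Real.mul_rpow hH0.le (Real.exp_pos _).le, ← Real.exp_mul, abs_mul, abs_of_pos hk]
          ring_nf
      _ ≤ _ := by gcongr; exact exp_neg_two_mul_abs_le _
  rw [mul_min_of_nonneg _ _ (by positivity)]
  refine le_min ?_ ?_
  · have hcont : ContinuousOn (fun t => ∫ u in (0 : ℝ)..t, φ u) (uIcc 0 1) :=
      intervalIntegral.continuousOn_primitive_interval' hφ (by simp)
    have hi : IntervalIntegrable
        (fun t => φ t / (1 + (k * ((∫ u in (0 : ℝ)..t, φ u) - s)) ^ 2)) volume 0 1 := by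
      simp only [div_eq_mul_inv]
      exact hφ.mul_continuousOn (ContinuousOn.inv₀ (by fun_prop) fun t _ => by positivity)
    calc ∫ t in (0 : ℝ)..1, v t
        ≤ ∫ t in (0 : ℝ)..1,
            H ^ k / c * (φ t / (1 + (k * ((∫ u in (0 : ℝ)..t, φ u) - s)) ^ 2)) := by
          refine intervalIntegral.integral_mono_on zero_le_one hv (hi.const_mul _) fun t ht => ?_
          refine (hvd t ht).trans ?_
          calc _ ≤ H ^ k * (1 / (1 + (k * ((∫ u in (0 : ℝ)..t, φ u) - s)) ^ 2)) * φ t / c := by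
                have := hφ0 t ht
                have := hdk t ht
                gcongr
            _ = _ := by ring
      _ ≤ _ := by
          rw [intervalIntegral.integral_const_mul]
          gcongr
          exact integral_div_one_add_sq_le hk hφ
  · calc ∫ t in (0 : ℝ)..1, v t ≤ ∫ t in (0 : ℝ)..1, H ^ k / c * φ t := by
          refine intervalIntegral.integral_mono_on zero_le_one hv (hφ.const_mul _) fun t ht => ?_
          refine (hvd t ht).trans ?_
          have h0 := hφ0 t ht
          have : d t ^ k ≤ H ^ k := (hdk t ht).trans (mul_le_of_le_one_right (by positivity) (by
            rw [div_le_one (by positivity)]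
            nlinarith [sq_nonneg (k * ((∫ u in (0 : ℝ)..t, φ u) - s))]))
          calc _ ≤ H ^ k * φ t / c := by gcongr
            _ = _ := by ring
      _ = _ := intervalIntegral.integral_const_mul _ _

end Growth

/-- The final numerical estimate: `G` plays the role of `√(δ(x)δ(y))`. -/
lemma rpow_mul_min_le {G D A B k ℓ : ℝ} (hG : 0 < G) (hD : 0 ≤ D) (hA : 0 < A) (hB : 0 < B)
    (hk : 0 < k) (hk1 : k ≤ 1) (hℓ : ℓ ≤ Real.log (1 + A * D / G)) :
    (G * Real.exp ℓ) ^ k * min B ℓ ≤ (1 + A) ^ k * (A + B) * D ^ k := by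
  have hexp : G * Real.exp ℓ ≤ G + A * D := by
    have : Real.exp ℓ ≤ 1 + A * D / G := by
      rw [← Real.exp_log (show 0 < 1 + A * D / G by positivity)]
      exact Real.exp_le_exp.2 hℓ
    calc _ ≤ G * (1 + A * D / G) := by gcongr
      _ = _ := by field_simp
  have hℓ' : ℓ ≤ A * D / G := by
    have := Real.log_le_sub_one_of_pos (show 0 < 1 + A * D / G by positivity)
    linarith
  rcases le_total G D with h | h
  · have h1 : (G * Real.exp ℓ) ^ k ≤ (1 + A) ^ k * D ^ k := by
      rw [← Real.mul_rpow (by positivity) hD]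
      exact Real.rpow_le_rpow (by positivity) (by linarith) hk.le
    calc _ ≤ (G * Real.exp ℓ) ^ k * (A + B) := by
          gcongr; exact (min_le_left _ _).trans (by linarith)
      _ ≤ ((1 + A) ^ k * D ^ k) * (A + B) := by gcongr
      _ = _ := by ring
  · have h1 : (G * Real.exp ℓ) ^ k ≤ (1 + A) ^ k * G ^ k := by
      rw [← Real.mul_rpow (by positivity) hG.le]
      exact Real.rpow_le_rpow (by positivity) (by nlinarith) hk.le
    have h2 : D / G ≤ (D / G) ^ k := by
      have := Real.rpow_le_rpow_of_exponent_ge' (div_nonneg hD hG.le)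
        ((div_le_one hG).2 h) hk.le hk1
      rwa [Real.rpow_one] at this
    have h3 : min B ℓ ≤ A * (D / G) ^ k := (min_le_right _ _).trans <| hℓ'.trans <| by
      rw [mul_div_assoc]; gcongr
    calc _ ≤ (G * Real.exp ℓ) ^ k * (A * (D / G) ^ k) := by gcongr
      _ ≤ ((1 + A) ^ k * G ^ k) * (A * (D / G) ^ k) := by gcongr
      _ = (1 + A) ^ k * A * D ^ k := by
          rw [Real.div_rpow hD hG.le]
          have := (Real.rpow_pos_of_pos hG k).ne'
          field_simp
      _ ≤ _ := by gcongr; linarith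

/-- `γ` is `C¹` on each of finitely many consecutive closed intervals filling `[a, b]`. -/
inductive C1Chain {E : Type*} [NormedAddCommGroup E] [NormedSpace ℝ E] (γ : ℝ → E) :
    ℝ → ℝ → Prop
  | refl (a : ℝ) : C1Chain γ a a
  | snoc {a b c : ℝ} : C1Chain γ a b → b < c → ContDiffOn ℝ 1 γ (Icc b c) → C1Chain γ a c

namespace C1Chain

variable {E : Type*} [NormedAddCommGroup E] [NormedSpace ℝ E] {γ γ' : ℝ → E} {a b c s : ℝ}

lemma le (h : C1Chain γ a b) : a ≤ b := by
  induction h with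
  | refl => exact le_rfl
  | snoc _ hbc _ ih => exact ih.trans hbc.le

lemma of_contDiffOn (hab : a ≤ b) (h : ContDiffOn ℝ 1 γ (Icc a b)) : C1Chain γ a b := by
  rcases hab.eq_or_lt with rfl | hab
  · exact .refl _
  · exact .snoc (.refl _) hab h

lemma trans (h : C1Chain γ a b) (h' : C1Chain γ b c) : C1Chain γ a c := by
  induction h' with
  | refl => exact h
  | snoc _ hbc hd ih => exact .snoc ih hbc hd

lemma congr (h : C1Chain γ a b) (he : EqOn γ' γ (Icc a b)) : C1Chain γ' a b := by
  induction h with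
  | refl => exact .refl _
  | snoc h hbc hd ih =>
    exact .snoc (ih (he.mono (Icc_subset_Icc_right hbc.le))) hbc
      (hd.congr (he.mono (Icc_subset_Icc_left h.le)))

lemma left (h : C1Chain γ a b) (has : a ≤ s) (hsb : s ≤ b) : C1Chain γ a s := by
  induction h with
  | refl => rw [le_antisymm hsb has]; exact .refl _
  | snoc h hbc hd ih =>
    rcases le_or_gt s _ with hs | hs
    · exact ih hs
    · exact .snoc h hs (hd.mono (Icc_subset_Icc_right hsb))

lemma right (h : C1Chain γ a b) (has : a ≤ s) (hsb : s ≤ b) : C1Chain γ s b := by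
  induction h with
  | refl => rw [le_antisymm hsb has]; exact .refl _
  | snoc h hbc hd ih =>
    rcases le_or_gt s _ with hs | hs
    · exact .snoc (ih hs) hbc hd
    · exact of_contDiffOn hsb (hd.mono (Icc_subset_Icc_left hs.le))

lemma comp_add (h : C1Chain γ a b) (r : ℝ) : C1Chain (fun t => γ (t + r)) (a - r) (b - r) := by
  induction h with
  | refl => exact .refl _
  | snoc h hbc hd ih =>
    refine .snoc ih (by linarith) (hd.comp (by fun_prop) fun t ht => ?_)
    exact ⟨by linarith [ht.1], by linarith [ht.2]⟩

lemma continuousOn (h : C1Chain γ a b) : ContinuousOn γ (Icc a b) := by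
  induction h with
  | refl => simp
  | snoc h hbc hd ih =>
    rw [← Icc_union_Icc_eq_Icc h.le hbc.le]
    exact ih.union_of_isClosed hd.continuousOn isClosed_Icc isClosed_Icc

lemma exists_finite_differentiableAt (h : C1Chain γ a b) :
    ∃ S : Set ℝ, S.Finite ∧ ∀ t ∈ Ioo a b \ S, DifferentiableAt ℝ γ t := by
  induction h with
  | refl => exact ⟨∅, finite_empty, by simp⟩
  | @snoc b c h hbc hd ih =>
    obtain ⟨S, hS, hSd⟩ := ih
    refine ⟨insert b S, hS.insert b, fun t ht => ?_⟩
    simp only [Set.mem_sdiff, mem_insert_iff, not_or] at ht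
    rcases lt_or_gt_of_ne ht.2.1 with h1 | h1
    · exact hSd t ⟨⟨ht.1.1, h1⟩, ht.2.2⟩
    · exact (hd.differentiableOn one_ne_zero).differentiableAt (Icc_mem_nhds h1 ht.1.2)

/-- The displacement along a piecewise `C¹` curve is at most its length. -/
lemma norm_sub_le [CompleteSpace E] (h : C1Chain γ a b)
    (hi : IntervalIntegrable (fun t => ‖deriv γ t‖) volume a b) :
    ‖γ b - γ a‖ ≤ ∫ t in a..b, ‖deriv γ t‖ := by
  obtain ⟨S, hS, hSd⟩ := h.exists_finite_differentiableAt
  rw [← MeasureTheory.integral_eq_of_hasDerivAt_off_countable_of_le γ (deriv γ) h.le hS.countable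
    h.continuousOn (fun t ht => (hSd t ht).hasDerivAt)
    (hi.mono_fun (aestronglyMeasurable_deriv γ _) (ae_of_all _ fun _ => (norm_norm _).ge))]
  exact intervalIntegral.norm_integral_le_integral_norm h.le

end C1Chain

lemma PiecewiseC1On.c1Chain {n : ℕ} {γ : ℝ → EuclideanSpace ℂ (Fin n)} {a b : ℝ}
    (h : PiecewiseC1On γ a b) : C1Chain γ a b := by
  obtain ⟨-, k, t, ht, rfl, rfl, hd⟩ := h
  have key : ∀ i : Fin (k + 1), C1Chain γ (t 0) (t i) := fun i => by
    induction i using Fin.induction with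
    | zero => exact .refl _
    | succ i ih => exact .snoc ih (ht i.castSucc_lt_succ) (hd i)
  exact key _

lemma C1Chain.piecewiseC1On {n : ℕ} {γ : ℝ → EuclideanSpace ℂ (Fin n)} {a b : ℝ}
    (h : C1Chain γ a b) : PiecewiseC1On γ a b := by
  refine ⟨h.continuousOn, ?_⟩
  induction h with
  | refl => exact ⟨0, fun _ => a, fun i j h => absurd h (by omega), rfl, rfl, fun i => i.elim0⟩
  | @snoc b c h hbc hd ih =>
    obtain ⟨k, t, ht, h0, h1, hd'⟩ := ih
    refine ⟨k + 1, Fin.snoc t c, ?_, ?_, by simp, fun i => ?_⟩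
    · rw [Fin.strictMono_iff_lt_succ]
      intro i
      induction i using Fin.lastCases with
      | last => simpa [h1] using hbc
      | cast i =>
        rw [← Fin.castSucc_succ, Fin.snoc_castSucc, Fin.snoc_castSucc]
        exact ht i.castSucc_lt_succ
    · rw [← Fin.castSucc_zero, Fin.snoc_castSucc, h0]
    · induction i using Fin.lastCases with
      | last => simpa [h1] using hd
      | cast i =>
        rw [← Fin.castSucc_succ, Fin.snoc_castSucc, Fin.snoc_castSucc]
        exact hd' i

section Splice

variable {n : ℕ} {Ω : Set (EuclideanSpace ℂ (Fin n))}
  {F : EuclideanSpace ℂ (Fin n) → EuclideanSpace ℂ (Fin n) → ℝ}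
  {α β γ : ℝ → EuclideanSpace ℂ (Fin n)} {x y z w : EuclideanSpace ℂ (Fin n)} {a b s : ℝ}

/-- `γ` is a piecewise `C¹` curve in `Ω` on the interval `[a, b]`. -/
def IsArcIn (Ω : Set (EuclideanSpace ℂ (Fin n))) (γ : ℝ → EuclideanSpace ℂ (Fin n))
    (a b : ℝ) : Prop :=
  C1Chain γ a b ∧ ∀ t ∈ Icc a b, γ t ∈ Ω

lemma IsCurveIn.isArcIn (h : IsCurveIn Ω x y γ) : IsArcIn Ω γ 0 1 :=
  ⟨h.1.c1Chain, h.2.1⟩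

lemma IsArcIn.left (h : IsArcIn Ω γ a b) (has : a ≤ s) (hsb : s ≤ b) : IsArcIn Ω γ a s :=
  ⟨h.1.left has hsb, fun t ht => h.2 t (Icc_subset_Icc_right hsb ht)⟩

lemma IsArcIn.right (h : IsArcIn Ω γ a b) (has : a ≤ s) (hsb : s ≤ b) : IsArcIn Ω γ s b :=
  ⟨h.1.right has hsb, fun t ht => h.2 t (Icc_subset_Icc_left has ht)⟩

lemma IsArcIn.comp_add (h : IsArcIn Ω γ a b) (r : ℝ) :
    IsArcIn Ω (fun t => γ (t + r)) (a - r) (b - r) :=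
  ⟨h.1.comp_add r, fun t ht => h.2 _ ⟨by linarith [ht.1], by linarith [ht.2]⟩⟩

/-- Follow `α` up to time `a`, and `β` afterwards. -/
def splice (a : ℝ) (α β : ℝ → EuclideanSpace ℂ (Fin n)) (t : ℝ) : EuclideanSpace ℂ (Fin n) :=
  if t ≤ a then α t else β t

lemma isCurveIn_splice (hα : IsArcIn Ω α 0 a) (hβ : IsArcIn Ω β a 1) (h : α a = β a) :
    IsCurveIn Ω (α 0) (β 1) (splice a α β) := by
  have e1 : EqOn (splice a α β) α (Icc 0 a) := fun t ht => if_pos ht.2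
  have e2 : EqOn (splice a α β) β (Icc a 1) := fun t ht => by
    rcases ht.1.eq_or_lt with rfl | hlt
    · simp [splice, h]
    · exact if_neg hlt.not_ge
  refine ⟨((hα.1.congr e1).trans (hβ.1.congr e2)).piecewiseC1On, fun t ht => ?_,
    e1 ⟨le_rfl, hα.1.le⟩, e2 ⟨hβ.1.le, le_rfl⟩⟩
  rcases le_total t a with hta | hta
  · rw [e1 ⟨ht.1, hta⟩]; exact hα.2 t ⟨ht.1, hta⟩
  · rw [e2 ⟨hta, ht.2⟩]; exact hβ.2 t ⟨hta, ht.2⟩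

lemma eqOn_splice_left (ha : 0 ≤ a) :
    EqOn (fun t => F (splice a α β t) (deriv (splice a α β) t)) (fun t => F (α t) (deriv α t))
      (uIoo 0 a) := by
  intro t ht
  rw [uIoo_of_le ha] at ht
  have : splice a α β =ᶠ[nhds t] α := by
    filter_upwards [Iio_mem_nhds ht.2] with u hu using if_pos (le_of_lt hu)
  simp only [this.eq_of_nhds, this.deriv_eq]

lemma eqOn_splice_right (ha : a ≤ 1) :
    EqOn (fun t => F (splice a α β t) (deriv (splice a α β) t)) (fun t => F (β t) (deriv β t))
      (uIoo a 1) := by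
  intro t ht
  rw [uIoo_of_le ha] at ht
  have : splice a α β =ᶠ[nhds t] β := by
    filter_upwards [Ioi_mem_nhds ht.1] with u hu using if_neg (not_le_of_gt hu)
  simp only [this.eq_of_nhds, this.deriv_eq]

lemma intervalIntegrable_splice_iff (h0 : 0 ≤ a) (h1 : a ≤ 1) :
    IntervalIntegrable (fun t => F (splice a α β t) (deriv (splice a α β) t)) volume 0 1 ↔
      IntervalIntegrable (fun t => F (α t) (deriv α t)) volume 0 a ∧
      IntervalIntegrable (fun t => F (β t) (deriv β t)) volume a 1 := by
  rw [← intervalIntegrable_congr_uIoo (eqOn_splice_left (β := β) h0),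
    ← intervalIntegrable_congr_uIoo (eqOn_splice_right (α := α) h1)]
  refine ⟨fun h => ⟨h.mono_set ?_, h.mono_set ?_⟩, fun h => h.1.trans h.2⟩
  · rw [uIcc_of_le h0, uIcc_of_le zero_le_one]; exact Icc_subset_Icc_right h1
  · rw [uIcc_of_le h1, uIcc_of_le zero_le_one]; exact Icc_subset_Icc_left h0

lemma Flength_splice (h0 : 0 ≤ a) (h1 : a ≤ 1)
    (hα : IntervalIntegrable (fun t => F (α t) (deriv α t)) volume 0 a)
    (hβ : IntervalIntegrable (fun t => F (β t) (deriv β t)) volume a 1) :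
    Flength F (splice a α β) 0 1 = Flength F α 0 a + Flength F β a 1 := by
  rw [Flength, Flength, Flength,
    ← intervalIntegral.integral_add_adjacent_intervals
      ((intervalIntegrable_congr_uIoo (eqOn_splice_left h0)).2 hα)
      ((intervalIntegrable_congr_uIoo (eqOn_splice_right h1)).2 hβ),
    intervalIntegral.integral_congr_uIoo (eqOn_splice_left h0),
    intervalIntegral.integral_congr_uIoo (eqOn_splice_right h1)]

lemma isArcIn_segment {f : ℝ → ℝ} (hf : ContDiff ℝ 1 f) (hab : a ≤ b)
    (hfI : ∀ t ∈ Icc a b, f t ∈ Icc (0 : ℝ) 1) (hs : segment ℝ z w ⊆ Ω) :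
    IsArcIn Ω (fun t => AffineMap.lineMap z w (f t)) a b := by
  refine ⟨.of_contDiffOn hab (ContDiff.contDiffOn ?_), fun t ht => hs ?_⟩
  · simp only [AffineMap.lineMap_apply_module]
    fun_prop
  · rw [segment_eq_image_lineMap]
    exact ⟨_, hfI t ht, rfl⟩

lemma isCurveIn_const (hz : z ∈ Ω) : IsCurveIn Ω z z fun _ => z :=
  ⟨(C1Chain.of_contDiffOn zero_le_one contDiffOn_const).piecewiseC1On, fun _ _ => hz, rfl, rfl⟩

end Splice

section Boundary

variable {n : ℕ} {Ω : Set (EuclideanSpace ℂ (Fin n))} {z : EuclideanSpace ℂ (Fin n)}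

lemma frontier_nonempty_of_isBounded [NeZero n] (hb : IsBounded Ω) (hz : z ∈ Ω) :
    (frontier Ω).Nonempty := by
  rw [nonempty_frontier_iff]
  refine ⟨⟨z, hz⟩, fun h => ?_⟩
  rw [h] at hb
  exact NormedSpace.unbounded_univ ℝ _ hb

lemma bdist_pos [NeZero n] (ho : IsOpen Ω) (hb : IsBounded Ω) (hz : z ∈ Ω) : 0 < bdist Ω z := by
  refine (isClosed_frontier.notMem_iff_infDist_pos (frontier_nonempty_of_isBounded hb hz)).1 ?_
  rw [ho.frontier_eq]
  exact fun h => h.2 hz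

lemma ball_bdist_subset [NeZero n] (ho : IsOpen Ω) (hb : IsBounded Ω) (hz : z ∈ Ω) :
    ball z (bdist Ω z) ⊆ Ω := by
  have hc : IsPreconnected (ball z (bdist Ω z)) := (convex_ball _ _).isPreconnected
  intro w hw
  by_contra hwΩ
  have hfr : ∀ p ∈ ball z (bdist Ω z), p ∉ frontier Ω := fun p hp hpf => by
    rw [mem_ball, dist_comm] at hp
    exact absurd hp (not_lt.2 (infDist_le_dist_of_mem hpf))
  simp only [ho.frontier_eq, Set.mem_sdiff, not_and, not_not] at hfr
  obtain ⟨p, -, hp1, hp2⟩ := hc Ω (closure Ω)ᶜ ho isClosed_closure.isOpen_compl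
    (fun p hp => or_iff_not_imp_right.2 fun h => hfr p hp (not_not.1 h))
    ⟨z, mem_ball_self (bdist_pos ho hb hz), hz⟩ ⟨w, hw, fun h => hwΩ (hfr w hw h)⟩
  exact hp2 (subset_closure hp1)

lemma exists_bdist_ne [NeZero n] (ho : IsOpen Ω) (hb : IsBounded Ω) (hz : z ∈ Ω) (r : ℝ) :
    ∃ w, segment ℝ z w ⊆ Ω ∧ bdist Ω w ≠ r := by
  by_cases hr : bdist Ω z = r
  · have hpos := bdist_pos ho hb hz
    obtain ⟨p, hp, hpd⟩ := isClosed_frontier.exists_infDist_eq_dist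
      (frontier_nonempty_of_isBounded hb hz) z
    change bdist Ω z = dist z p at hpd
    refine ⟨midpoint ℝ z p, ?_, fun h => ?_⟩
    · refine ((convex_ball z (bdist Ω z)).segment_subset (mem_ball_self hpos) ?_).trans
        (ball_bdist_subset ho hb hz)
      rw [mem_ball, dist_midpoint_left, ← hpd]
      norm_num
      linarith
    · have h1 : bdist Ω (midpoint ℝ z p) ≤ _ := infDist_le_dist_of_mem hp
      rw [dist_midpoint_right, ← hpd] at h1
      norm_num at h1
      linarith
  · exact ⟨z, by simpa using hz, hr⟩

lemma exists_bdist_le (hb : IsBounded Ω) : ∃ D > 0, ∀ z ∈ Ω, bdist Ω z ≤ D := by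
  rcases (frontier Ω).eq_empty_or_nonempty with h | ⟨p, hp⟩
  · exact ⟨1, one_pos, fun z _ => by simp [bdist, h]⟩
  · obtain ⟨D, hD⟩ := hb.subset_ball_lt 0 p
    exact ⟨D, hD.1, fun z hz => (infDist_le_dist_of_mem hp).trans (hD.2 hz).le⟩

lemma continuous_bdist : Continuous (bdist Ω) := continuous_infDist_pt _

end Boundary

/-- The hypotheses on the integrand `F`, with exponent `k = 1 / m`. -/
structure IsAdmissible {n : ℕ} (Ω : Set (EuclideanSpace ℂ (Fin n)))
    (F : EuclideanSpace ℂ (Fin n) → EuclideanSpace ℂ (Fin n) → ℝ) (k c A : ℝ) : Prop where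
  isOpen : IsOpen Ω
  isBounded : IsBounded Ω
  nonneg : ∀ z ∈ Ω, ∀ X, 0 ≤ F z X
  lower : ∀ z ∈ Ω, ∀ X : EuclideanSpace ℂ (Fin n), F z X ≥ c * ‖X‖ / bdist Ω z ^ k
  log_lower : ∀ (σ : ℝ → EuclideanSpace ℂ (Fin n)) (x y : EuclideanSpace ℂ (Fin n)),
    IsCurveIn Ω x y σ → Flength F σ 0 1 ≥ (1 / 2) * |Real.log (bdist Ω x / bdist Ω y)|
  upper : ∀ x ∈ Ω, ∀ y ∈ Ω,
    dF Ω F x y ≤ Real.log (1 + A * dist x y / Real.sqrt (bdist Ω x * bdist Ω y))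

namespace IsAdmissible

variable {n : ℕ} {Ω : Set (EuclideanSpace ℂ (Fin n))}
  {F : EuclideanSpace ℂ (Fin n) → EuclideanSpace ℂ (Fin n) → ℝ} {k c A : ℝ}
  {α β γ : ℝ → EuclideanSpace ℂ (Fin n)} {x y z w : EuclideanSpace ℂ (Fin n)} {a b t : ℝ}

lemma nonneg_along (h : IsAdmissible Ω F k c A) (hγ : IsCurveIn Ω x y γ)
    (ht : t ∈ Icc (0 : ℝ) 1) : 0 ≤ F (γ t) (deriv γ t) :=
  h.nonneg _ (hγ.2.1 t ht) _

lemma Flength_left_nonneg (h : IsAdmissible Ω F k c A) (hγ : IsCurveIn Ω x y γ)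
    (ht : t ∈ Icc (0 : ℝ) 1) : 0 ≤ Flength F γ 0 t :=
  intervalIntegral.integral_nonneg ht.1 fun _ hu =>
    h.nonneg_along hγ (Icc_subset_Icc_right ht.2 hu)

lemma Flength_right_nonneg (h : IsAdmissible Ω F k c A) (hγ : IsCurveIn Ω x y γ)
    (ht : t ∈ Icc (0 : ℝ) 1) : 0 ≤ Flength F γ t 1 :=
  intervalIntegral.integral_nonneg ht.2 fun _ hu =>
    h.nonneg_along hγ (Icc_subset_Icc_left ht.1 hu)

lemma exists_loop (h : IsAdmissible Ω F k c A) (hz : z ∈ Ω) {ε : ℝ} (hε : 0 < ε) :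
    ∃ γ, IsCurveIn Ω z z γ ∧ Flength F γ 0 1 < ε := by
  have h1 : dF Ω F z z < ε := (h.upper z hz z hz).trans_lt (by simpa using hε)
  obtain ⟨_, ⟨γ, hγ, rfl⟩, hlt⟩ :=
    exists_lt_of_csInf_lt (s := {L | ∃ γ, IsCurveIn Ω z z γ ∧ L = Flength F γ 0 1})
      ⟨_, _, isCurveIn_const hz, rfl⟩ h1
  exact ⟨γ, hγ, hlt⟩

variable [NeZero n]

lemma bdist_pos (h : IsAdmissible Ω F k c A) (hz : z ∈ Ω) : 0 < bdist Ω z :=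
  _root_.bdist_pos h.isOpen h.isBounded hz

lemma abs_log_sub_le (h : IsAdmissible Ω F k c A) (hγ : IsCurveIn Ω x y γ) :
    1 / 2 * |Real.log (bdist Ω x) - Real.log (bdist Ω y)| ≤ Flength F γ 0 1 := by
  obtain ⟨-, hm, rfl, rfl⟩ := id hγ
  have hx := h.bdist_pos (hm 0 (by simp))
  have hy := h.bdist_pos (hm 1 (by simp))
  rw [← Real.log_div hx.ne' hy.ne']
  exact h.log_lower _ _ _ hγ

lemma intervalIntegrable_of_bdist_ne (h : IsAdmissible Ω F k c A) (hγ : IsCurveIn Ω x y γ)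
    (hne : bdist Ω x ≠ bdist Ω y) :
    IntervalIntegrable (fun t => F (γ t) (deriv γ t)) volume 0 1 := by
  by_contra hni
  have h1 := h.abs_log_sub_le hγ
  rw [Flength, intervalIntegral.integral_undef hni] at h1
  have h2 : Real.log (bdist Ω x) - Real.log (bdist Ω y) = 0 :=
    abs_eq_zero.1 (le_antisymm (by linarith) (abs_nonneg _))
  obtain ⟨-, hm, rfl, rfl⟩ := hγ
  exact hne (Real.log_injOn_pos (h.bdist_pos (hm 0 (by simp))) (h.bdist_pos (hm 1 (by simp)))
    (sub_eq_zero.1 h2))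

/-- The integrand is integrable along every curve: otherwise one could alter half of the curve so
as to violate the logarithmic lower bound. -/
lemma intervalIntegrable (h : IsAdmissible Ω F k c A) (hγ : IsCurveIn Ω x y γ) :
    IntervalIntegrable (fun t => F (γ t) (deriv γ t)) volume 0 1 := by
  have hz : γ (1 / 2) ∈ Ω := hγ.2.1 _ (by norm_num)
  have harc := hγ.isArcIn
  obtain ⟨-, -, rfl, rfl⟩ := hγ
  have hl : IntervalIntegrable (fun t => F (γ t) (deriv γ t)) volume 0 (1 / 2) := by
    obtain ⟨w, hw, hne⟩ := exists_bdist_ne h.isOpen h.isBounded hz (bdist Ω (γ 0))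
    have hβ : IsArcIn Ω (fun t => AffineMap.lineMap (γ (1 / 2)) w (2 * t - 1)) (1 / 2) 1 :=
      isArcIn_segment (by fun_prop) (by norm_num)
        (fun t ht => ⟨by linarith [ht.1], by linarith [ht.2]⟩) hw
    have hσ := isCurveIn_splice (harc.left (by norm_num) (by norm_num)) hβ (by simp)
    refine ((intervalIntegrable_splice_iff (by norm_num) (by norm_num)).1
      (h.intervalIntegrable_of_bdist_ne hσ ?_)).1
    norm_num
    exact hne.symm
  have hr : IntervalIntegrable (fun t => F (γ t) (deriv γ t)) volume (1 / 2) 1 := by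
    obtain ⟨w, hw, hne⟩ := exists_bdist_ne h.isOpen h.isBounded hz (bdist Ω (γ 1))
    have hα : IsArcIn Ω (fun t => AffineMap.lineMap (γ (1 / 2)) w (1 - 2 * t)) 0 (1 / 2) :=
      isArcIn_segment (by fun_prop) (by norm_num)
        (fun t ht => ⟨by linarith [ht.2], by linarith [ht.1]⟩) hw
    have hσ := isCurveIn_splice hα (harc.right (by norm_num) (by norm_num)) (by simp)
    refine ((intervalIntegrable_splice_iff (by norm_num) (by norm_num)).1
      (h.intervalIntegrable_of_bdist_ne hσ ?_)).2
    norm_num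
    exact hne
  exact hl.trans hr

lemma intervalIntegrable_left (h : IsAdmissible Ω F k c A) (hγ : IsCurveIn Ω x y γ)
    (ht : t ∈ Icc (0 : ℝ) 1) : IntervalIntegrable (fun t => F (γ t) (deriv γ t)) volume 0 t :=
  (h.intervalIntegrable hγ).mono_set <| by
    rw [uIcc_of_le ht.1, uIcc_of_le zero_le_one]; exact Icc_subset_Icc_right ht.2

lemma intervalIntegrable_right (h : IsAdmissible Ω F k c A) (hγ : IsCurveIn Ω x y γ)
    (ht : t ∈ Icc (0 : ℝ) 1) : IntervalIntegrable (fun t => F (γ t) (deriv γ t)) volume t 1 :=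
  (h.intervalIntegrable hγ).mono_set <| by
    rw [uIcc_of_le ht.2, uIcc_of_le zero_le_one]; exact Icc_subset_Icc_left ht.1

lemma Flength_add (h : IsAdmissible Ω F k c A) (hγ : IsCurveIn Ω x y γ)
    (ht : t ∈ Icc (0 : ℝ) 1) : Flength F γ 0 t + Flength F γ t 1 = Flength F γ 0 1 :=
  intervalIntegral.integral_add_adjacent_intervals (h.intervalIntegrable_left hγ ht)
    (h.intervalIntegrable_right hγ ht)

lemma norm_le (h : IsAdmissible Ω F k c A) (hc : 0 < c) (hz : z ∈ Ω)
    (X : EuclideanSpace ℂ (Fin n)) : ‖X‖ ≤ bdist Ω z ^ k * F z X / c := by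
  have h1 := h.lower z hz X
  have h2 := Real.rpow_pos_of_pos (h.bdist_pos hz) k
  rw [ge_iff_le, div_le_iff₀ h2] at h1
  rw [le_div_iff₀ hc]
  linarith

lemma norm_deriv_le (h : IsAdmissible Ω F k c A) (hc : 0 < c) (hk : 0 < k) {D : ℝ}
    (hD : ∀ z ∈ Ω, bdist Ω z ≤ D) (hγ : IsCurveIn Ω x y γ) (ht : t ∈ Icc (0 : ℝ) 1) :
    ‖deriv γ t‖ ≤ D ^ k / c * F (γ t) (deriv γ t) := by
  have h0 := h.nonneg_along hγ ht
  have hz := hγ.2.1 t ht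
  calc _ ≤ bdist Ω (γ t) ^ k * F (γ t) (deriv γ t) / c := h.norm_le hc hz _
    _ ≤ D ^ k * F (γ t) (deriv γ t) / c := by
      gcongr
      exacts [(h.bdist_pos hz).le, hD _ hz]
    _ = _ := by ring

lemma intervalIntegrable_norm_deriv (h : IsAdmissible Ω F k c A) (hc : 0 < c) (hk : 0 < k)
    (hγ : IsCurveIn Ω x y γ) : IntervalIntegrable (fun t => ‖deriv γ t‖) volume 0 1 := by
  obtain ⟨D, -, hD⟩ := exists_bdist_le h.isBounded
  refine ((h.intervalIntegrable hγ).const_mul (D ^ k / c)).mono_fun'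
    (aestronglyMeasurable_deriv γ _).norm ?_
  refine (ae_restrict_mem measurableSet_uIoc).mono fun t ht => ?_
  rw [uIoc_of_le zero_le_one] at ht
  simpa only [norm_norm] using h.norm_deriv_le hc hk hD hγ (Ioc_subset_Icc_self ht)

lemma dist_le (h : IsAdmissible Ω F k c A) (hc : 0 < c) (hk : 0 < k) {D : ℝ} (hD0 : 0 < D)
    (hD : ∀ z ∈ Ω, bdist Ω z ≤ D) (hγ : IsCurveIn Ω x y γ) (ht : t ∈ Icc (0 : ℝ) 1) :
    dist (γ t) x ≤ D ^ k / c * Flength F γ 0 1 := by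
  have hi : IntervalIntegrable (fun t => ‖deriv γ t‖) volume 0 t :=
    (h.intervalIntegrable_norm_deriv hc hk hγ).mono_set <| by
      rw [uIcc_of_le ht.1, uIcc_of_le zero_le_one]; exact Icc_subset_Icc_right ht.2
  calc dist (γ t) x = ‖γ t - γ 0‖ := by rw [dist_eq_norm, hγ.2.2.1]
    _ ≤ ∫ u in (0 : ℝ)..t, ‖deriv γ u‖ := (hγ.isArcIn.left ht.1 ht.2).1.norm_sub_le hi
    _ ≤ ∫ u in (0 : ℝ)..t, D ^ k / c * F (γ u) (deriv γ u) :=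
      intervalIntegral.integral_mono_on ht.1 hi ((h.intervalIntegrable_left hγ ht).const_mul _)
        fun u hu => h.norm_deriv_le hc hk hD hγ (Icc_subset_Icc_right ht.2 hu)
    _ = D ^ k / c * Flength F γ 0 t := intervalIntegral.integral_const_mul _ _
    _ ≤ _ := by
      gcongr
      linarith [h.Flength_add hγ ht, h.Flength_right_nonneg hγ ht]

lemma abs_log_sub_le_of_forall (h : IsAdmissible Ω F k c A) {K P I : ℝ} (hz : z ∈ Ω)
    (H : ∀ ε > 0, ∃ w, dist w z ≤ K * ε ∧ 1 / 2 * |P - Real.log (bdist Ω w)| ≤ I + ε) :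
    1 / 2 * |P - Real.log (bdist Ω z)| ≤ I := by
  choose! w hw1 hw2 using H
  have hε : Filter.Tendsto (fun ε : ℝ => ε) (nhdsWithin 0 (Ioi 0)) (nhds 0) :=
    tendsto_nhdsWithin_of_tendsto_nhds tendsto_id
  have hwz : Filter.Tendsto w (nhdsWithin 0 (Ioi 0)) (nhds z) := by
    rw [tendsto_iff_dist_tendsto_zero]
    refine squeeze_zero' (Filter.Eventually.of_forall fun _ => dist_nonneg)
      (eventually_mem_nhdsWithin.mono fun ε hε => hw1 ε hε) ?_
    simpa using hε.const_mul K
  have hl : Filter.Tendsto (fun ε => 1 / 2 * |P - Real.log (bdist Ω (w ε))|)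
      (nhdsWithin 0 (Ioi 0)) (nhds (1 / 2 * |P - Real.log (bdist Ω z)|)) :=
    ((tendsto_const_nhds.sub (((continuous_bdist.tendsto z).comp hwz).log
      (h.bdist_pos hz).ne')).abs).const_mul _
  have hr : Filter.Tendsto (fun ε => I + ε) (nhdsWithin 0 (Ioi 0)) (nhds I) := by
    simpa using hε.const_add I
  exact le_of_tendsto_of_tendsto hl hr (eventually_mem_nhdsWithin.mono fun ε hε => hw2 ε hε)

/-- The logarithmic lower bound for an initial arc, without reparametrizing it: continue the arc
by a short piece of loop. -/
lemma abs_log_sub_le_left (h : IsAdmissible Ω F k c A) (hc : 0 < c) (hk : 0 < k)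
    (hγ : IsCurveIn Ω x y γ) (ht : t ∈ Icc (0 : ℝ) 1) :
    1 / 2 * |Real.log (bdist Ω x) - Real.log (bdist Ω (γ t))| ≤ Flength F γ 0 t := by
  obtain ⟨D, hD0, hD⟩ := exists_bdist_le h.isBounded
  have hz := hγ.2.1 t ht
  refine h.abs_log_sub_le_of_forall (K := D ^ k / c) hz fun ε hε => ?_
  obtain ⟨l, hl, hlε⟩ := h.exists_loop hz hε
  have ht' : 1 - t ∈ Icc (0 : ℝ) 1 := ⟨by linarith [ht.2], by linarith [ht.1]⟩
  refine ⟨l (1 - t), (h.dist_le hc hk hD0 hD hl ht').trans (by gcongr), ?_⟩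
  have hβ := (hl.isArcIn.left ht'.1 ht'.2).comp_add (-t)
  simp only [sub_neg_eq_add, zero_add, sub_add_cancel] at hβ
  have hσ := isCurveIn_splice (hγ.isArcIn.left ht.1 ht.2) hβ (by simp [hl.2.2.1])
  have hi := (intervalIntegrable_splice_iff ht.1 ht.2).1 (h.intervalIntegrable hσ)
  have hlen := h.abs_log_sub_le hσ
  rw [Flength_splice ht.1 ht.2 hi.1 hi.2, hγ.2.2.1, ← sub_eq_add_neg] at hlen
  have he : Flength F (fun u => l (u + -t)) t 1 = Flength F l 0 (1 - t) := by
    simp only [Flength, deriv_comp_add_const]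
    rw [intervalIntegral.integral_comp_add_right (fun u => F (l u) (deriv l u))]
    simp [sub_eq_add_neg]
  linarith [h.Flength_add hl ht', h.Flength_right_nonneg hl ht']

/-- The logarithmic lower bound for a final arc. -/
lemma abs_log_sub_le_right (h : IsAdmissible Ω F k c A) (hc : 0 < c) (hk : 0 < k)
    (hγ : IsCurveIn Ω x y γ) (ht : t ∈ Icc (0 : ℝ) 1) :
    1 / 2 * |Real.log (bdist Ω y) - Real.log (bdist Ω (γ t))| ≤ Flength F γ t 1 := by
  obtain ⟨D, hD0, hD⟩ := exists_bdist_le h.isBounded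
  have hz := hγ.2.1 t ht
  refine h.abs_log_sub_le_of_forall (K := D ^ k / c) hz fun ε hε => ?_
  obtain ⟨l, hl, hlε⟩ := h.exists_loop hz hε
  have ht' : 1 - t ∈ Icc (0 : ℝ) 1 := ⟨by linarith [ht.2], by linarith [ht.1]⟩
  refine ⟨l (1 - t), (h.dist_le hc hk hD0 hD hl ht').trans (by gcongr), ?_⟩
  have hα := (hl.isArcIn.right ht'.1 ht'.2).comp_add (1 - t)
  simp only [sub_self, sub_sub_cancel] at hα
  have hσ := isCurveIn_splice hα (hγ.isArcIn.right ht.1 ht.2) (by simp [hl.2.2.2])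
  have hi := (intervalIntegrable_splice_iff ht.1 ht.2).1 (h.intervalIntegrable hσ)
  have hlen := h.abs_log_sub_le hσ
  rw [Flength_splice ht.1 ht.2 hi.1 hi.2, hγ.2.2.2, zero_add, abs_sub_comm] at hlen
  have he : Flength F (fun u => l (u + (1 - t))) 0 t = Flength F l (1 - t) 1 := by
    simp only [Flength, deriv_comp_add_const]
    rw [intervalIntegral.integral_comp_add_right (fun u => F (l u) (deriv l u))]
    simp
  linarith [h.Flength_add hl ht', h.Flength_left_nonneg hl ht']

lemma bdist_le_of_abs_log_sub_le (h : IsAdmissible Ω F k c A) (hx : x ∈ Ω) (hz : z ∈ Ω) {I : ℝ}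
    (hI : 1 / 2 * |Real.log (bdist Ω x) - Real.log (bdist Ω z)| ≤ I) :
    bdist Ω z ≤ bdist Ω x * Real.exp (2 * I) := by
  rw [← Real.log_le_log_iff (h.bdist_pos hz) (mul_pos (h.bdist_pos hx) (Real.exp_pos _)),
    Real.log_mul (h.bdist_pos hx).ne' (Real.exp_pos _).ne', Real.log_exp]
  linarith [neg_abs_le (Real.log (bdist Ω x) - Real.log (bdist Ω z))]

/-- The Gehring–Hayman estimate. -/
lemma eLength_le (h : IsAdmissible Ω F k c A) (hk : 0 < k) (hk1 : k ≤ 1) (hc : 0 < c)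
    (hA : 0 < A) (hγ : IsCurveIn Ω x y γ) (hgeo : Flength F γ 0 1 = dF Ω F x y) :
    eLength γ 0 1 ≤ (1 + A) ^ k * (A + Real.pi / k) / c * dist x y ^ k := by
  have hx : x ∈ Ω := hγ.2.2.1 ▸ hγ.2.1 0 (by simp)
  have hy : y ∈ Ω := hγ.2.2.2 ▸ hγ.2.1 1 (by simp)
  have hpx := h.bdist_pos hx
  have hpy := h.bdist_pos hy
  have h1 := integral_le_of_exp_growth (d := fun t => bdist Ω (γ t)) hpx hpy hk hc
    (h.intervalIntegrable hγ) (h.intervalIntegrable_norm_deriv hc hk hγ)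
    (fun t ht => h.nonneg_along hγ ht) (fun t ht => (h.bdist_pos (hγ.2.1 t ht)).le)
    (fun t ht => h.norm_le hc (hγ.2.1 t ht) _)
    (fun t ht => h.bdist_le_of_abs_log_sub_le hx (hγ.2.1 t ht) (h.abs_log_sub_le_left hc hk hγ ht))
    (fun t ht => h.bdist_le_of_abs_log_sub_le hy (hγ.2.1 t ht) (h.abs_log_sub_le_right hc hk hγ ht))
  have h2 := rpow_mul_min_le (Real.sqrt_pos.2 (mul_pos hpx hpy)) dist_nonneg hA
    (div_pos Real.pi_pos hk) hk hk1 (hgeo.le.trans (h.upper x hx y hy))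
  calc eLength γ 0 1 ≤ _ := h1
    _ = ((Real.sqrt (bdist Ω x * bdist Ω y) * Real.exp (Flength F γ 0 1)) ^ k *
          min (Real.pi / k) (Flength F γ 0 1)) / c := by rw [div_mul_eq_mul_div]; rfl
    _ ≤ ((1 + A) ^ k * (A + Real.pi / k) * dist x y ^ k) / c := by gcongr
    _ = _ := by ring

end IsAdmissible

/-- Gehring–Hayman theorem, first part of Theorem 1.6, abstract form.
If `F(z,X) ≥ c|X|/δ(z)^{1/m}`, every piecewise `C¹` curve `σ` in `Ω` has
`F-length(σ) ≥ (1/2)|log(δ(σ(0))/δ(σ(1)))|`, and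
`d_F(x,y) ≤ log(1 + A|x−y|/√(δ(x)δ(y)))`, then every `F`-geodesic `γ` from `x` to `y`
satisfies `L(γ) ≤ C|x−y|^{1/m}`. -/
theorem statement11 {n : ℕ} (Ω : Set (EuclideanSpace ℂ (Fin n)))
    (hΩo : IsOpen Ω) (hΩc : IsConnected Ω) (hΩb : IsBounded Ω)
    (m : ℝ) (hm : 1 < m)
    (F : EuclideanSpace ℂ (Fin n) → EuclideanSpace ℂ (Fin n) → ℝ)
    (hFmeas : Measurable fun p : EuclideanSpace ℂ (Fin n) × EuclideanSpace ℂ (Fin n) =>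
      F p.1 p.2)
    (hFnn : ∀ z ∈ Ω, ∀ X, 0 ≤ F z X)
    (c A : ℝ) (hc : 0 < c) (hA : 0 < A)
    (hFlow : ∀ z ∈ Ω, ∀ X : EuclideanSpace ℂ (Fin n),
      F z X ≥ c * ‖X‖ / bdist Ω z ^ (1 / m))
    (hloglow : ∀ (σ : ℝ → EuclideanSpace ℂ (Fin n)) (x y : EuclideanSpace ℂ (Fin n)),
      IsCurveIn Ω x y σ →
      Flength F σ 0 1 ≥ (1 / 2) * |Real.log (bdist Ω x / bdist Ω y)|)
    (hup : ∀ x ∈ Ω, ∀ y ∈ Ω,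
      dF Ω F x y ≤ Real.log (1 + A * dist x y / Real.sqrt (bdist Ω x * bdist Ω y))) :
    ∃ C > 0, ∀ (γ : ℝ → EuclideanSpace ℂ (Fin n)) (x y : EuclideanSpace ℂ (Fin n)),
      IsCurveIn Ω x y γ → Flength F γ 0 1 = dF Ω F x y →
      eLength γ 0 1 ≤ C * dist x y ^ (1 / m) := by
  have hk : 0 < 1 / m := by positivity
  have hk1 : 1 / m ≤ 1 := (div_le_one (by linarith)).2 hm.le
  have hπ := Real.pi_pos
  refine ⟨(1 + A) ^ (1 / m) * (A + Real.pi / (1 / m)) / c, by positivity,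
    fun γ x y hγ hgeo => ?_⟩
  rcases Nat.eq_zero_or_pos n with rfl | hn
  · have : ∀ t, deriv γ t = 0 := fun t => Subsingleton.elim _ _
    simp only [eLength, this, norm_zero, intervalIntegral.integral_zero]
    positivity
  · have : NeZero n := ⟨hn.ne'⟩
    exact IsAdmissible.eLength_le ⟨hΩo, hΩb, hFnn, hFlow, hloglow, hup⟩ hk hk1 hc hA hγ hgeo
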